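/- arXiv:cond-mat/0112045 — 2 statements merged into one kernel-verified Lean document; each statement's English description precedes it below -/
import Mathlib

section
/- (Theorem 1.) In the CreditRisk⁺ model, for every i = 1,…,n and every real z with 0 < z < ρ_g, the function f_i(z) = E_α[N_i z^L] = Σ_{l=0}^∞ E_α[N_i 1_{L = l}] z^l converges and satisfies f_i(z) = z^{ν_i} g_α(z) (S₀ r_{0,i} + Σ_{j=1}^k α_j β_j r_{j,i} / (1 + β_j − β_j Σ_{h=1}^n r_{j,h} z^{ν_h})), where g_α(z) = E_α[z^L]. -/
open MeasureTheory ProbabilityTheory Real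

noncomputable section

/-- The gamma measure is sigma-finite (needed to form product measures). -/
instance gammaMeasure.instSigmaFinite (a r : ℝ) :
    SigmaFinite (gammaMeasure a r) := by
  unfold ProbabilityTheory.gammaMeasure ProbabilityTheory.gammaPDF
  infer_instance

/-- Conditional Poisson intensity `R_i(s) = r_{0,i} S_0 + sum_j r_{j,i} s_j`. -/
def crpR {n k : ℕ} (S0 : ℝ) (r0 : Fin n → ℝ) (r : Fin k → Fin n → ℝ)
    (s : Fin k → ℝ) (i : Fin n) : ℝ :=
  r0 i * S0 + ∑ j, r j i * s j

/-- The CreditRisk⁺ measure `P_α` on `(Fin k → ℝ) × (Fin n → ℕ)`: the product of the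
Gamma factor measures (shape `α j`, scale `β j`, i.e. rate `(β j)⁻¹`), composed with the
kernel sending the factor vector `s` to the product of Poisson measures with means `R_i(s)`,
recorded jointly with `s`. -/
def crpMeasure {n k : ℕ} (S0 : ℝ) (r0 : Fin n → ℝ) (r : Fin k → Fin n → ℝ)
    (α β : Fin k → ℝ) : Measure ((Fin k → ℝ) × (Fin n → ℕ)) :=
  (Measure.pi fun j => gammaMeasure (α j) (β j)⁻¹).bind fun s =>
    (Measure.pi fun i => poissonMeasure (crpR S0 r0 r s i).toNNReal).map fun x => (s, x)

/-- Portfolio loss `L = ∑ ν_i N_i`. -/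
def crpLoss {n k : ℕ} (ν : Fin n → ℕ) (x : (Fin k → ℝ) × (Fin n → ℕ)) : ℕ :=
  ∑ i, ν i * x.2 i

/-- Value-at-risk of the ℕ-valued loss `L` at level `δ`: the smallest `l` with
`P[L ≤ l] ≥ δ` (a natural number since `L` is ℕ-valued). -/
def crpVaR {n k : ℕ} (P : Measure ((Fin k → ℝ) × (Fin n → ℕ)))
    (ν : Fin n → ℕ) (δ : ℝ) : ℕ :=
  sInf {l : ℕ | ENNReal.ofReal δ ≤ P {x | crpLoss ν x ≤ l}}

/-- `ρ_g`, the radius of convergence of the probability generating function. -/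
def crpRadius {n k : ℕ} (ν : Fin n → ℕ) (r : Fin k → Fin n → ℝ) (β : Fin k → ℝ) : ℝ :=
  sSup {z : ℝ | 0 < z ∧ ∀ j, ∑ i, r j i * z ^ ν i < 1 + (β j)⁻¹}

open scoped NNReal ENNReal

/-- If weighting the `j`-th factor by `g` multiplies its integral by `d`, then weighting a product
of functions of the separate coordinates by `g (x j)` multiplies its integral by `d`. -/
lemma integral_eval_mul_prod {ι : Type*} [Fintype ι] {E : Type*} [MeasurableSpace E]
    (μ : ι → Measure E) [∀ l, SigmaFinite (μ l)] (f : ι → E → ℝ) (j : ι) (g : E → ℝ) (d : ℝ)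
    (hf : ∀ l, Integrable (f l) (μ l)) (hg : Integrable (fun x => g x * f j x) (μ j))
    (hd : ∫ x, g x * f j x ∂μ j = d * ∫ x, f j x ∂μ j) :
    Integrable (fun x : ι → E => g (x j) * ∏ l, f l (x l)) (Measure.pi μ) ∧
      ∫ x, g (x j) * ∏ l, f l (x l) ∂Measure.pi μ =
        d * ∫ x, ∏ l, f l (x l) ∂Measure.pi μ := by
  classical
  have key : (fun x : ι → E => g (x j) * ∏ l, f l (x l)) =
      fun x => ∏ l, Function.update f j (fun y => g y * f j y) l (x l) := by
    funext x
    rw [← Finset.mul_prod_erase _ _ (Finset.mem_univ j),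
      ← Finset.mul_prod_erase _ (fun l => Function.update f j _ l (x l)) (Finset.mem_univ j),
      Function.update_self, ← mul_assoc]
    congr 1
    refine Finset.prod_congr rfl fun l hl => ?_
    rw [Function.update_of_ne (Finset.ne_of_mem_erase hl)]
  rw [key]
  constructor
  · refine Integrable.fintype_prod fun l => ?_
    by_cases h : l = j
    · subst h
      simpa using hg
    · rw [Function.update_of_ne h]
      exact hf l
  · rw [integral_fintype_prod_eq_prod, integral_fintype_prod_eq_prod,
      ← Finset.mul_prod_erase _ _ (Finset.mem_univ j),
      ← Finset.mul_prod_erase _ (fun l => ∫ x, f l x ∂μ l) (Finset.mem_univ j),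
      Function.update_self, hd, ← mul_assoc]
    congr 1
    refine Finset.prod_congr rfl fun l hl => ?_
    rw [Function.update_of_ne (Finset.ne_of_mem_erase hl)]

lemma hasSum_poisson_weight_mul_pow (r : ℝ≥0) (w : ℝ) :
    HasSum (fun m : ℕ => exp (-r) * r ^ m / m.factorial * w ^ m) (exp (r * (w - 1))) := by
  convert! (NormedSpace.expSeries_div_hasSum_exp ((r : ℝ) * w)).mul_left (exp (-r)) using 1
  · funext m
    rw [mul_pow]
    ring
  · rw [← exp_eq_exp_ℝ, ← exp_add]
    ring_nf

lemma hasSum_poisson_weight_mul_nat_mul_pow (r : ℝ≥0) (w : ℝ) :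
    HasSum (fun m : ℕ => exp (-r) * r ^ m / m.factorial * (m * w ^ m))
      (r * w * exp (r * (w - 1))) := by
  rw [← hasSum_nat_add_iff' 1]
  convert! (hasSum_poisson_weight_mul_pow r w).mul_left (r * w) using 1
  · funext m
    rw [Nat.factorial_succ]
    push_cast
    field_simp
    ring
  · simp

lemma integrable_pow_poissonMeasure (r : ℝ≥0) {w : ℝ} (hw : 0 ≤ w) :
    Integrable (fun m : ℕ => w ^ m) (poissonMeasure r) := by
  rw [integrable_poissonMeasure_iff]
  simpa [abs_of_nonneg hw] using (hasSum_poisson_weight_mul_pow r w).summable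

lemma integral_pow_poissonMeasure (r : ℝ≥0) (w : ℝ) :
    ∫ m : ℕ, w ^ m ∂poissonMeasure r = exp (r * (w - 1)) := by
  rw [integral_poissonMeasure]
  exact (hasSum_poisson_weight_mul_pow r w).tsum_eq

lemma integrable_nat_mul_pow_poissonMeasure (r : ℝ≥0) {w : ℝ} (hw : 0 ≤ w) :
    Integrable (fun m : ℕ => (m : ℝ) * w ^ m) (poissonMeasure r) := by
  rw [integrable_poissonMeasure_iff]
  simpa [abs_of_nonneg hw] using (hasSum_poisson_weight_mul_nat_mul_pow r w).summable

lemma integral_nat_mul_pow_poissonMeasure (r : ℝ≥0) (w : ℝ) :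
    ∫ m : ℕ, (m : ℝ) * w ^ m ∂poissonMeasure r = r * w * ∫ m : ℕ, w ^ m ∂poissonMeasure r := by
  rw [integral_pow_poissonMeasure, integral_poissonMeasure]
  exact (hasSum_poisson_weight_mul_nat_mul_pow r w).tsum_eq

lemma integrable_and_integral_pow_mul_exp_gammaMeasure {a b c : ℝ} (ha : 0 < a) (hb : 0 < b)
    (hc : c < b) (m : ℕ) :
    Integrable (fun x => x ^ m * exp (c * x)) (gammaMeasure a b) ∧
      ∫ x, x ^ m * exp (c * x) ∂gammaMeasure a b =
        b ^ a / Gamma a * ((1 / (b - c)) ^ (a + m) * Gamma (a + m)) := by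
  have hm : 0 < a + m := by positivity
  have hbc : 0 < b - c := sub_pos.2 hc
  have hmeas : Measurable (gammaPDF a b) := (measurable_gammaPDFReal a b).ennreal_ofReal
  have hlt : ∀ᵐ x, gammaPDF a b x < ∞ := ae_of_all _ fun _ => ENNReal.ofReal_lt_top
  have hdens : (fun x => (gammaPDF a b x).toReal • (x ^ m * exp (c * x))) =ᵐ[volume]
      (Set.Ioi 0).indicator fun x =>
        b ^ a / Gamma a * (x ^ (a + m - 1) * exp (-((b - c) * x))) := by
    have h0 : ∀ᵐ x : ℝ, x ≠ 0 := by simp [ae_iff]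
    filter_upwards [h0] with x hx
    rw [gammaPDF, ENNReal.toReal_ofReal (gammaPDFReal_nonneg ha hb x), gammaPDFReal]
    rcases lt_or_gt_of_ne hx with h | h
    · simp [h.not_ge, h.le]
    · rw [if_pos h.le, Set.indicator_of_mem (Set.mem_Ioi.2 h),
        show a + m - 1 = (a - 1) + m by ring, rpow_add h, rpow_natCast,
        show -((b - c) * x) = -(b * x) + c * x by ring, exp_add, smul_eq_mul]
      ring
  have hint := integral_rpow_mul_exp_neg_mul_Ioi hm hbc
  have hion : IntegrableOn (fun x : ℝ => x ^ (a + m - 1) * exp (-((b - c) * x))) (Set.Ioi 0) := by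
    refine .of_integral_ne_zero ?_
    rw [hint]
    have := Gamma_pos_of_pos hm
    positivity
  unfold gammaMeasure
  constructor
  · rw [integrable_withDensity_iff_integrable_smul' hmeas hlt, integrable_congr hdens,
      integrable_indicator_iff measurableSet_Ioi]
    exact hion.const_mul _
  · rw [integral_withDensity_eq_integral_toReal_smul hmeas hlt, integral_congr_ae hdens,
      integral_indicator measurableSet_Ioi, integral_const_mul, hint]

lemma integrable_exp_gammaMeasure {a b c : ℝ} (ha : 0 < a) (hb : 0 < b) (hc : c < b) :
    Integrable (fun x => exp (c * x)) (gammaMeasure a b) := by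
  simpa using (integrable_and_integral_pow_mul_exp_gammaMeasure ha hb hc 0).1

lemma integrable_mul_exp_gammaMeasure {a b c : ℝ} (ha : 0 < a) (hb : 0 < b) (hc : c < b) :
    Integrable (fun x => x * exp (c * x)) (gammaMeasure a b) := by
  simpa using (integrable_and_integral_pow_mul_exp_gammaMeasure ha hb hc 1).1

lemma integral_mul_exp_gammaMeasure {a b c : ℝ} (ha : 0 < a) (hb : 0 < b) (hc : c < b) :
    ∫ x, x * exp (c * x) ∂gammaMeasure a b =
      a / (b - c) * ∫ x, exp (c * x) ∂gammaMeasure a b := by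
  have h0 := (integrable_and_integral_pow_mul_exp_gammaMeasure ha hb hc 0).2
  have h1 := (integrable_and_integral_pow_mul_exp_gammaMeasure ha hb hc 1).2
  have hbc : 0 < b - c := sub_pos.2 hc
  simp only [pow_zero, one_mul, pow_one, Nat.cast_zero, add_zero, Nat.cast_one] at h0 h1
  rw [h0, h1, Gamma_add_one ha.ne', rpow_add (by positivity), rpow_one]
  ring

lemma ae_nonneg_gammaMeasure (a b : ℝ) : ∀ᵐ x ∂gammaMeasure a b, 0 ≤ x := by
  have hmeas : Measurable (gammaPDF a b) := (measurable_gammaPDFReal a b).ennreal_ofReal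
  rw [gammaMeasure, ae_withDensity_iff hmeas]
  refine ae_of_all _ fun x hx => ?_
  by_contra h
  exact hx (gammaPDF_of_neg (not_le.1 h))

lemma measurable_poissonMeasure : Measurable poissonMeasure := by
  refine Measure.measurable_of_measurable_coe _ fun A hA => ?_
  simp_rw [← Measure.tsum_indicator_apply_singleton _ A hA, poissonMeasure_singleton]
  refine Measurable.tsum fun m => ?_
  by_cases hm : m ∈ A <;> simp only [hm, Set.indicator_of_mem, Set.indicator_of_notMem,
    not_false_eq_true] <;> fun_prop

lemma measurable_crpR {n k : ℕ} (S0 : ℝ) (r0 : Fin n → ℝ) (r : Fin k → Fin n → ℝ) (i : Fin n) :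
    Measurable fun s => crpR S0 r0 r s i := by
  unfold crpR
  fun_prop

lemma crpR_nonneg {n k : ℕ} {S0 : ℝ} {r0 : Fin n → ℝ} {r : Fin k → Fin n → ℝ} (hS0 : 0 ≤ S0)
    (hr0 : ∀ i, 0 ≤ r0 i) (hr : ∀ j i, 0 ≤ r j i) {s : Fin k → ℝ} (hs : ∀ j, 0 ≤ s j)
    (i : Fin n) : 0 ≤ crpR S0 r0 r s i :=
  add_nonneg (mul_nonneg (hr0 i) hS0) (Finset.sum_nonneg fun j _ => mul_nonneg (hr j i) (hs j))

/-- The conditional law of the default counts given the risk factors. -/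
def crpKernel {n k : ℕ} (S0 : ℝ) (r0 : Fin n → ℝ) (r : Fin k → Fin n → ℝ) :
    Kernel (Fin k → ℝ) (Fin n → ℕ) where
  toFun s := Measure.pi fun i => poissonMeasure (crpR S0 r0 r s i).toNNReal
  measurable' := by
    refine Measure.measurable_of_measurable_coe _ fun A hA => ?_
    simp_rw [← Measure.tsum_indicator_apply_singleton _ A hA, Measure.pi_singleton]
    refine Measurable.tsum fun x => ?_
    have h : Measurable fun s : Fin k → ℝ =>
        ∏ i, poissonMeasure (crpR S0 r0 r s i).toNNReal {x i} :=
      Finset.measurable_prod _ fun i _ =>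
        (Measure.measurable_coe (MeasurableSet.singleton _)).comp
          (measurable_poissonMeasure.comp (measurable_crpR S0 r0 r i).real_toNNReal)
    by_cases hx : x ∈ A
    · simpa only [hx, Set.indicator_of_mem] using h
    · simp only [hx, Set.indicator_of_notMem, not_false_eq_true, measurable_const]

lemma crpKernel_apply {n k : ℕ} (S0 : ℝ) (r0 : Fin n → ℝ) (r : Fin k → Fin n → ℝ)
    (s : Fin k → ℝ) :
    crpKernel S0 r0 r s = Measure.pi fun i => poissonMeasure (crpR S0 r0 r s i).toNNReal :=
  rfl

instance {n k : ℕ} (S0 : ℝ) (r0 : Fin n → ℝ) (r : Fin k → Fin n → ℝ) :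
    IsMarkovKernel (crpKernel S0 r0 r) :=
  ⟨fun s => by rw [crpKernel_apply]; infer_instance⟩

lemma crpMeasure_eq_compProd {n k : ℕ} (S0 : ℝ) (r0 : Fin n → ℝ) (r : Fin k → Fin n → ℝ)
    (α β : Fin k → ℝ) :
    crpMeasure S0 r0 r α β =
      (Measure.pi fun j => gammaMeasure (α j) (β j)⁻¹) ⊗ₘ crpKernel S0 r0 r := by
  have happly : ∀ A : Set ((Fin k → ℝ) × (Fin n → ℕ)), MeasurableSet A → ∀ s,
      (Measure.pi fun i => poissonMeasure (crpR S0 r0 r s i).toNNReal).map (fun x => (s, x)) A =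
        crpKernel S0 r0 r s (Prod.mk s ⁻¹' A) := fun A hA s => by
    rw [Measure.map_apply measurable_prodMk_left hA, crpKernel_apply]
  have hmeas : Measurable fun s : Fin k → ℝ =>
      (Measure.pi fun i => poissonMeasure (crpR S0 r0 r s i).toNNReal).map fun x => (s, x) := by
    refine Measure.measurable_of_measurable_coe _ fun A hA => ?_
    simp_rw [happly A hA]
    exact Kernel.measurable_kernel_prodMk_left hA
  ext A hA
  rw [crpMeasure, Measure.bind_apply hA hmeas.aemeasurable, Measure.compProd_apply hA]
  simp_rw [happly A hA]

lemma pow_crpLoss {n k : ℕ} (ν : Fin n → ℕ) (z : ℝ) (x : (Fin k → ℝ) × (Fin n → ℕ)) :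
    z ^ crpLoss ν x = ∏ h, (z ^ ν h) ^ x.2 h := by
  simp_rw [crpLoss, ← Finset.prod_pow_eq_pow_sum, pow_mul]

lemma measurable_crpLoss {n k : ℕ} (ν : Fin n → ℕ) :
    Measurable (crpLoss ν : (Fin k → ℝ) × (Fin n → ℕ) → ℕ) :=
  (Measurable.of_discrete (f := fun y : Fin n → ℕ => ∑ h, ν h * y h)).comp measurable_snd

lemma sum_lt_of_lt_crpRadius {n k : ℕ} {ν : Fin n → ℕ} {r : Fin k → Fin n → ℝ}
    (hr : ∀ j i, 0 ≤ r j i) {β : Fin k → ℝ} {z : ℝ} (hz0 : 0 < z) (hz : z < crpRadius ν r β)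
    (j : Fin k) : ∑ h, r j h * z ^ ν h < 1 + (β j)⁻¹ := by
  have hne : {z : ℝ | 0 < z ∧ ∀ j, ∑ i, r j i * z ^ ν i < 1 + (β j)⁻¹}.Nonempty := by
    rw [Set.nonempty_iff_ne_empty]
    intro h
    rw [crpRadius, h, Real.sSup_empty] at hz
    exact hz0.not_gt hz
  obtain ⟨w, ⟨-, hw⟩, hzw⟩ := exists_lt_of_lt_csSup hne hz
  refine (Finset.sum_le_sum fun h _ => ?_).trans_lt (hw j)
  exact mul_le_mul_of_nonneg_left (pow_le_pow_left₀ hz0.le hzw.le _) (hr j h)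

lemma integrable_prod_pow_crpKernel {n k : ℕ} (S0 : ℝ) (r0 : Fin n → ℝ) (r : Fin k → Fin n → ℝ)
    (s : Fin k → ℝ) {w : Fin n → ℝ} (hw : ∀ h, 0 ≤ w h) :
    Integrable (fun y => ∏ h, w h ^ y h) (crpKernel S0 r0 r s) :=
  Integrable.fintype_prod fun h => integrable_pow_poissonMeasure _ (hw h)

/-- The conditional probability generating function of the default counts, as a product of
exponentials of the separate risk factors. -/
lemma integral_prod_pow_crpKernel {n k : ℕ} {S0 : ℝ} {r0 : Fin n → ℝ} {r : Fin k → Fin n → ℝ}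
    (hS0 : 0 ≤ S0) (hr0 : ∀ i, 0 ≤ r0 i) (hr : ∀ j i, 0 ≤ r j i) (hrsum : ∀ j, ∑ i, r j i = 1)
    {s : Fin k → ℝ} (hs : ∀ j, 0 ≤ s j) (w : Fin n → ℝ) :
    ∫ y, ∏ h, w h ^ y h ∂crpKernel S0 r0 r s =
      exp (S0 * ∑ h, r0 h * (w h - 1)) * ∏ j, exp ((∑ h, r j h * w h - 1) * s j) := by
  rw [crpKernel_apply, integral_fintype_prod_eq_prod (fun h (m : ℕ) => w h ^ m)]
  simp_rw [integral_pow_poissonMeasure, coe_toNNReal _ (crpR_nonneg hS0 hr0 hr hs _)]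
  rw [← exp_sum, ← exp_sum, ← exp_add]
  congr 1
  have hsplit : ∀ j, (∑ h, r j h * w h - 1) * s j = ∑ h, r j h * s j * (w h - 1) := fun j => by
    conv_lhs => rw [← hrsum j, ← Finset.sum_sub_distrib, Finset.sum_mul]
    exact Finset.sum_congr rfl fun h _ => by ring
  simp_rw [hsplit, crpR, add_mul, Finset.sum_add_distrib, Finset.sum_mul, Finset.mul_sum]
  rw [Finset.sum_comm]
  congr 1
  exact Finset.sum_congr rfl fun h _ => by ring

lemma integral_eval_mul_prod_pow_crpKernel {n k : ℕ} {S0 : ℝ} {r0 : Fin n → ℝ}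
    {r : Fin k → Fin n → ℝ} (hS0 : 0 ≤ S0) (hr0 : ∀ i, 0 ≤ r0 i) (hr : ∀ j i, 0 ≤ r j i)
    {s : Fin k → ℝ} (hs : ∀ j, 0 ≤ s j) {w : Fin n → ℝ} (hw : ∀ h, 0 ≤ w h) (i : Fin n) :
    Integrable (fun y => (y i : ℝ) * ∏ h, w h ^ y h) (crpKernel S0 r0 r s) ∧
      ∫ y, (y i : ℝ) * ∏ h, w h ^ y h ∂crpKernel S0 r0 r s =
        crpR S0 r0 r s i * w i * ∫ y, ∏ h, w h ^ y h ∂crpKernel S0 r0 r s := by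
  refine integral_eval_mul_prod _ (fun h (m : ℕ) => w h ^ m) i (fun m => (m : ℝ)) _
    (fun h => integrable_pow_poissonMeasure _ (hw h))
    (integrable_nat_mul_pow_poissonMeasure _ (hw i)) ?_
  rw [integral_nat_mul_pow_poissonMeasure, coe_toNNReal _ (crpR_nonneg hS0 hr0 hr hs i)]

/-- Tonelli for the model: a nonnegative function is integrated by first conditioning on
nonnegative risk factors. -/
lemma integrable_and_integral_crpMeasure_of_nonneg {n k : ℕ} {S0 : ℝ} {r0 : Fin n → ℝ}
    {r : Fin k → Fin n → ℝ} {α β : Fin k → ℝ} {f : (Fin k → ℝ) × (Fin n → ℕ) → ℝ}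
    {F : (Fin k → ℝ) → ℝ} (hf : Measurable f) (hf0 : ∀ x, 0 ≤ f x)
    (hcond : ∀ s, (∀ j, 0 ≤ s j) → Integrable (fun y => f (s, y)) (crpKernel S0 r0 r s))
    (hF : ∀ s, (∀ j, 0 ≤ s j) → ∫ y, f (s, y) ∂crpKernel S0 r0 r s = F s)
    (hFint : Integrable F (Measure.pi fun j => gammaMeasure (α j) (β j)⁻¹)) :
    Integrable f (crpMeasure S0 r0 r α β) ∧
      ∫ x, f x ∂crpMeasure S0 r0 r α β =
        ∫ s, F s ∂Measure.pi fun j => gammaMeasure (α j) (β j)⁻¹ := by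
  have hpos : ∀ᵐ s ∂Measure.pi fun j => gammaMeasure (α j) (β j)⁻¹, ∀ j, 0 ≤ s j :=
    ae_all_iff.2 fun j => Measure.tendsto_eval_ae_ae.eventually (ae_nonneg_gammaMeasure _ _)
  rw [crpMeasure_eq_compProd]
  have hint : Integrable f
      ((Measure.pi fun j => gammaMeasure (α j) (β j)⁻¹) ⊗ₘ crpKernel S0 r0 r) := by
    rw [Measure.integrable_compProd_iff hf.aestronglyMeasurable]
    refine ⟨hpos.mono hcond, hFint.congr (hpos.mono fun s hs => ?_)⟩
    simp_rw [norm_of_nonneg (hf0 _)]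
    exact (hF s hs).symm
  refine ⟨hint, ?_⟩
  rw [Measure.integral_compProd hint]
  exact integral_congr_ae (hpos.mono hF)

/-- Theorem 1: for `0 < z < ρ_g`,
`f_i(z) = E_α[N_i z^L] = ∑_l E_α[N_i 1_{L=l}] z^l` converges and
`f_i(z) = z^{ν_i} g_α(z) (S₀ r_{0,i} + ∑_j α_j β_j r_{j,i}/(1 + β_j − β_j ∑_h r_{j,h} z^{ν_h}))`. -/
theorem crp_theorem_one {n k : ℕ} (hn : 0 < n) (hk : 0 < k)
    (ν : Fin n → ℕ) (hν : ∀ i, 0 < ν i)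
    (S0 : ℝ) (hS0 : 0 ≤ S0)
    (r0 : Fin n → ℝ) (r : Fin k → Fin n → ℝ)
    (hr0 : ∀ i, 0 ≤ r0 i) (hr : ∀ j i, 0 ≤ r j i)
    (hr0sum : ∑ i, r0 i = 1) (hrsum : ∀ j, ∑ i, r j i = 1)
    (hrpos : ∀ i, 0 < ∑ j, r j i)
    (α β : Fin k → ℝ) (hα : ∀ j, 0 < α j) (hβ : ∀ j, 0 < β j)
    (i : Fin n) (z : ℝ) (hz0 : 0 < z) (hzρ : z < crpRadius ν r β) :
    Integrable (fun x => (x.2 i : ℝ) * z ^ crpLoss ν x) (crpMeasure S0 r0 r α β) ∧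
    Summable (fun l : ℕ =>
      (∫ x in {y | crpLoss ν y = l}, (x.2 i : ℝ) ∂(crpMeasure S0 r0 r α β)) * z ^ l) ∧
    (∑' l : ℕ,
      (∫ x in {y | crpLoss ν y = l}, (x.2 i : ℝ) ∂(crpMeasure S0 r0 r α β)) * z ^ l)
      = ∫ x, (x.2 i : ℝ) * z ^ crpLoss ν x ∂(crpMeasure S0 r0 r α β) ∧
    ∫ x, (x.2 i : ℝ) * z ^ crpLoss ν x ∂(crpMeasure S0 r0 r α β)
      = z ^ ν i * (∫ x, z ^ crpLoss ν x ∂(crpMeasure S0 r0 r α β)) *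
        (S0 * r0 i +
          ∑ j, α j * β j * r j i / (1 + β j - β j * ∑ h, r j h * z ^ ν h)) := by
  have hw : ∀ h, 0 ≤ z ^ ν h := fun h => by positivity
  set c : Fin k → ℝ := fun j => ∑ h, r j h * z ^ ν h - 1 with hc
  set C : ℝ := exp (S0 * ∑ h, r0 h * (z ^ ν h - 1))
  set μ : Measure (Fin k → ℝ) := Measure.pi fun j => gammaMeasure (α j) (β j)⁻¹
  have hclt : ∀ j, c j < (β j)⁻¹ := fun j => by
    have := sum_lt_of_lt_crpRadius hr hz0 hzρ j
    simp only [hc]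
    linarith
  have hβ' : ∀ j, 0 < (β j)⁻¹ := fun j => inv_pos.2 (hβ j)
  have hexp : Integrable (fun s : Fin k → ℝ => ∏ l, exp (c l * s l)) μ :=
    Integrable.fintype_prod fun l => integrable_exp_gammaMeasure (hα l) (hβ' l) (hclt l)
  have hweight := fun j => integral_eval_mul_prod (fun j => gammaMeasure (α j) (β j)⁻¹)
    (fun l x => exp (c l * x)) j (fun x => x) _
    (fun l => integrable_exp_gammaMeasure (hα l) (hβ' l) (hclt l))
    (integrable_mul_exp_gammaMeasure (hα j) (hβ' j) (hclt j))
    (integral_mul_exp_gammaMeasure (hα j) (hβ' j) (hclt j))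
  have hmeas : Measurable fun x : (Fin k → ℝ) × (Fin n → ℕ) => z ^ crpLoss ν x :=
    (Measurable.of_discrete (f := fun m : ℕ => z ^ m)).comp (measurable_crpLoss ν)
  have hmeasN : Measurable fun x : (Fin k → ℝ) × (Fin n → ℕ) => (x.2 i : ℝ) :=
    (Measurable.of_discrete (f := fun y : Fin n → ℕ => (y i : ℝ))).comp measurable_snd
  obtain ⟨-, hg⟩ := integrable_and_integral_crpMeasure_of_nonneg (S0 := S0) (r0 := r0)
    (r := r) (α := α) (β := β) (F := fun s => C * ∏ l, exp (c l * s l)) hmeas (fun x => by positivity)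
    (fun s _ => by
      simp_rw [pow_crpLoss]
      exact integrable_prod_pow_crpKernel S0 r0 r s hw)
    (fun s hs => by
      simp_rw [pow_crpLoss]
      exact integral_prod_pow_crpKernel hS0 hr0 hr hrsum hs _)
    (hexp.const_mul C)
  have hterm : ∀ j, Integrable (fun s : Fin k → ℝ => r j i * (s j * ∏ l, exp (c l * s l))) μ :=
    fun j => (hweight j).1.const_mul _
  obtain ⟨hfint, hf⟩ := integrable_and_integral_crpMeasure_of_nonneg (S0 := S0) (r0 := r0)
    (r := r) (α := α) (β := β) (f := fun x => (x.2 i : ℝ) * z ^ crpLoss ν x)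
    (F := fun s => z ^ ν i * C * (r0 i * S0 * ∏ l, exp (c l * s l) +
      ∑ j, r j i * (s j * ∏ l, exp (c l * s l)))) (hmeasN.mul hmeas) (fun x => by positivity)
    (fun s hs => by
      simp_rw [pow_crpLoss]
      exact (integral_eval_mul_prod_pow_crpKernel hS0 hr0 hr hs hw i).1)
    (fun s hs => by
      simp_rw [pow_crpLoss]
      rw [(integral_eval_mul_prod_pow_crpKernel hS0 hr0 hr hs hw i).2,
        integral_prod_pow_crpKernel hS0 hr0 hr hrsum hs, crpR]
      simp_rw [← mul_assoc (r _ i), ← Finset.sum_mul]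
      ring)
    (((hexp.const_mul _).add (integrable_finsetSum _ fun j _ => hterm j)).const_mul _)
  have hsum : HasSum (fun l : ℕ =>
      (∫ x in {y | crpLoss ν y = l}, (x.2 i : ℝ) ∂(crpMeasure S0 r0 r α β)) * z ^ l)
      (∫ x, (x.2 i : ℝ) * z ^ crpLoss ν x ∂(crpMeasure S0 r0 r α β)) := by
    have hS : ∀ l : ℕ, MeasurableSet {y : (Fin k → ℝ) × (Fin n → ℕ) | crpLoss ν y = l} :=
      fun l => measurable_crpLoss ν (MeasurableSet.singleton l)
    have hU : ⋃ l : ℕ, {y : (Fin k → ℝ) × (Fin n → ℕ) | crpLoss ν y = l} = Set.univ := by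
      ext y
      simp
    have := hasSum_integral_iUnion hS
      (fun a b hab => Set.disjoint_left.2 fun y (ha : _ = a) (hb : _ = b) => hab (ha ▸ hb))
      hfint.integrableOn
    rw [hU, setIntegral_univ] at this
    refine this.congr_fun fun l => ?_
    rw [← integral_mul_const]
    refine setIntegral_congr_fun (hS l) fun y (hy : _ = l) => ?_
    simp only [hy]
  refine ⟨hfint, hsum.summable, hsum.tsum_eq, ?_⟩
  rw [hf, hg, integral_const_mul, integral_const_mul,
    integral_add (hexp.const_mul _) (integrable_finsetSum _ fun j _ => hterm j),
    integral_const_mul, integral_finsetSum _ fun j _ => hterm j]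
  have hcoef : ∀ j, ∫ s : Fin k → ℝ, r j i * (s j * ∏ l, exp (c l * s l)) ∂μ =
      α j * β j * r j i / (1 + β j - β j * ∑ h, r j h * z ^ ν h) *
        ∫ s, ∏ l, exp (c l * s l) ∂μ := fun j => by
    rw [integral_const_mul, (hweight j).2, ← mul_assoc]
    congr 1
    have hb := (hβ j).ne'
    have hden : 1 + β j - β j * ∑ h, r j h * z ^ ν h = β j * ((β j)⁻¹ - c j) := by
      simp only [hc]
      field_simp
      ring
    have hpos := (sub_pos.2 (hclt j)).ne'
    rw [hden]
    generalize (β j)⁻¹ - c j = d at hpos ⊢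
    field_simp
  simp_rw [hcoef, ← Finset.sum_mul]
  ring
end
end

section
/- In the CreditRisk⁺ model, fix i ∈ {1,…,n}, a nonnegative integer t, and set Y = L − ν_i N_i. Then the following are equivalent: (a) P_α[L = t − ν_i] = 0 (interpreted as holding trivially if t < ν_i); (b) P_α[Y = t − m ν_i] = 0 for every integer m with 1 ≤ m ≤ t/ν_i; (c) P_α[L = t] = P_α[Y = t, N_i = 0]; (d) the events {L = t} and {Y = t} ∩ {N_i = 0} coincide up to a P_α-null set. -/
open MeasureTheory ProbabilityTheory Real

noncomputable section

/-- Each point of `ℕ^n` has mass a measurable function of the factors. -/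
lemma measurable_pi_poissonMeasure_singleton {n k : ℕ} (S0 : ℝ) (r0 : Fin n → ℝ)
    (r : Fin k → Fin n → ℝ) (v : Fin n → ℕ) :
    Measurable fun s : Fin k → ℝ =>
      (Measure.pi fun i => poissonMeasure (crpR S0 r0 r s i).toNNReal) {v} := by
  simp only [Measure.pi_singleton, poissonMeasure_singleton, crpR]
  fun_prop

lemma measurable_map_pi_poissonMeasure {n k : ℕ} (S0 : ℝ) (r0 : Fin n → ℝ)
    (r : Fin k → Fin n → ℝ) :
    Measurable fun s : Fin k → ℝ =>
      (Measure.pi fun i => poissonMeasure (crpR S0 r0 r s i).toNNReal).map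
        fun x => (s, x) := by
  refine Measure.measurable_of_measurable_coe _ fun B hB => ?_
  have hmass (s : Fin k → ℝ) :
      ((Measure.pi fun i => poissonMeasure (crpR S0 r0 r s i).toNNReal).map
        fun x => (s, x)) B = ∑' v, ((fun s => (s, v)) ⁻¹' B).indicator (fun s =>
          (Measure.pi fun i => poissonMeasure (crpR S0 r0 r s i).toNNReal) {v}) s := by
    rw [Measure.map_apply measurable_prodMk_left hB,
      ← Measure.tsum_indicator_apply_singleton _ _ (measurable_prodMk_left hB)]
    rfl
  simp only [hmass]
  exact Measurable.tsum fun v =>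
    (measurable_pi_poissonMeasure_singleton S0 r0 r v).indicator (measurable_prodMk_right hB)

lemma isProbabilityMeasure_crpMeasure {n k : ℕ} (S0 : ℝ) (r0 : Fin n → ℝ)
    (r : Fin k → Fin n → ℝ) {α β : Fin k → ℝ} (hα : ∀ j, 0 < α j) (hβ : ∀ j, 0 < β j) :
    IsProbabilityMeasure (crpMeasure S0 r0 r α β) := by
  have (j : Fin k) : IsProbabilityMeasure (gammaMeasure (α j) (β j)⁻¹) :=
    isProbabilityMeasure_gammaMeasure (hα j) (inv_pos.2 (hβ j))
  refine isProbabilityMeasure_bind (measurable_map_pi_poissonMeasure S0 r0 r).aemeasurable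
    (Filter.Eventually.of_forall fun s => ?_)
  exact Measure.isProbabilityMeasure_map measurable_prodMk_left.aemeasurable

lemma gammaMeasure_ae_pos (a r : ℝ) : ∀ᵐ x ∂gammaMeasure a r, 0 < x := by
  have hnull : ∫⁻ x in Set.Iio 0, gammaPDF a r x = 0 := lintegral_gammaPDF_of_nonpos le_rfl
  simp only [ae_iff, not_lt, gammaMeasure]
  change volume.withDensity (gammaPDF a r) (Set.Iic 0) = 0
  rwa [withDensity_apply _ measurableSet_Iic, setLIntegral_congr Iio_ae_eq_Iic.symm]

lemma crpR_pos {n k : ℕ} {S0 : ℝ} (hS0 : 0 ≤ S0) {r0 : Fin n → ℝ} {r : Fin k → Fin n → ℝ}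
    (hr0 : ∀ i, 0 ≤ r0 i) (hr : ∀ j i, 0 ≤ r j i) (hrpos : ∀ i, 0 < ∑ j, r j i)
    {s : Fin k → ℝ} (hs : ∀ j, 0 < s j) (i : Fin n) : 0 < crpR S0 r0 r s i := by
  obtain ⟨j, -, hj⟩ := Finset.exists_lt_of_sum_lt (s := Finset.univ) (f := fun _ : Fin k => (0 : ℝ))
    (g := fun j => r j i) (by simpa using hrpos i)
  exact add_pos_of_nonneg_of_pos (mul_nonneg (hr0 i) hS0)
    (Finset.sum_pos' (fun j _ => mul_nonneg (hr j i) (hs j).le)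
      ⟨j, Finset.mem_univ j, mul_pos hj (hs j)⟩)

/-- Every vector of counts has positive probability, so an event about the counts is null
exactly when it is empty. -/
lemma crpMeasure_counts_eq_zero_iff {n k : ℕ} {S0 : ℝ} (hS0 : 0 ≤ S0) {r0 : Fin n → ℝ}
    {r : Fin k → Fin n → ℝ} (hr0 : ∀ i, 0 ≤ r0 i) (hr : ∀ j i, 0 ≤ r j i)
    (hrpos : ∀ i, 0 < ∑ j, r j i) {α β : Fin k → ℝ} (hα : ∀ j, 0 < α j) (hβ : ∀ j, 0 < β j)
    (p : (Fin n → ℕ) → Prop) :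
    crpMeasure S0 r0 r α β {x | p x.2} = 0 ↔ ∀ v, ¬ p v := by
  refine ⟨fun h v hv => ?_, fun h => by simp [h]⟩
  have (j : Fin k) : IsProbabilityMeasure (gammaMeasure (α j) (β j)⁻¹) :=
    isProbabilityMeasure_gammaMeasure (hα j) (inv_pos.2 (hβ j))
  have hmeas : MeasurableSet {x : (Fin k → ℝ) × (Fin n → ℕ) | p x.2} :=
    measurable_snd (MeasurableSet.of_discrete (s := {v | p v}))
  rw [crpMeasure, Measure.bind_apply hmeas
    (measurable_map_pi_poissonMeasure S0 r0 r).aemeasurable, lintegral_eq_zero_iff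
    (Measure.measurable_measure.1 (measurable_map_pi_poissonMeasure S0 r0 r) _ hmeas)] at h
  have hpos : ∀ᵐ s ∂(Measure.pi fun j => gammaMeasure (α j) (β j)⁻¹), ∀ j, 0 < s j :=
    ae_all_iff.2 fun j => (Measure.quasiMeasurePreserving_eval
      (fun j => gammaMeasure (α j) (β j)⁻¹) j).ae (gammaMeasure_ae_pos _ _)
  obtain ⟨s, hs0, hs⟩ := (h.and hpos).exists
  beta_reduce at hs0
  rw [Pi.zero_apply, Measure.map_apply measurable_prodMk_left hmeas] at hs0
  have hsingle := measure_mono_null (Set.singleton_subset_iff.2 hv) hs0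
  rw [Measure.pi_singleton, Finset.prod_eq_zero_iff] at hsingle
  obtain ⟨i, -, hi⟩ := hsingle
  have hR := crpR_pos hS0 hr0 hr hrpos hs i
  refine (poissonMeasure_real_singleton_pos (v i) (Real.toNNReal_pos.2 hR)).ne' ?_
  rw [measureReal_def, hi, ENNReal.toReal_zero]

/-- with `Y = L − ν_i N_i`, the following are equivalent:
(a) `P_α[L = t − ν_i] = 0` (trivially true when `t < ν_i`);
(b) `P_α[Y = t − m ν_i] = 0` for all `1 ≤ m ≤ t/ν_i`;
(c) `P_α[L = t] = P_α[Y = t, N_i = 0]`;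
(d) `{L = t}` and `{Y = t, N_i = 0}` coincide up to a `P_α`-null set. -/
theorem crp_remark_equivalences {n k : ℕ} (hn : 0 < n) (hk : 0 < k)
    (ν : Fin n → ℕ) (hν : ∀ i, 0 < ν i)
    (S0 : ℝ) (hS0 : 0 ≤ S0)
    (r0 : Fin n → ℝ) (r : Fin k → Fin n → ℝ)
    (hr0 : ∀ i, 0 ≤ r0 i) (hr : ∀ j i, 0 ≤ r j i)
    (hr0sum : ∑ i, r0 i = 1) (hrsum : ∀ j, ∑ i, r j i = 1)
    (hrpos : ∀ i, 0 < ∑ j, r j i)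
    (α β : Fin k → ℝ) (hα : ∀ j, 0 < α j) (hβ : ∀ j, 0 < β j)
    (i : Fin n) (t : ℕ) :
    ((ν i ≤ t → (crpMeasure S0 r0 r α β) {x | crpLoss ν x = t - ν i} = 0) ↔
      (∀ m : ℕ, 1 ≤ m → m * ν i ≤ t →
        (crpMeasure S0 r0 r α β) {x | crpLoss ν x - ν i * x.2 i = t - m * ν i} = 0)) ∧
    ((∀ m : ℕ, 1 ≤ m → m * ν i ≤ t →
        (crpMeasure S0 r0 r α β) {x | crpLoss ν x - ν i * x.2 i = t - m * ν i} = 0) ↔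
      (crpMeasure S0 r0 r α β) {x | crpLoss ν x = t}
        = (crpMeasure S0 r0 r α β) {x | crpLoss ν x - ν i * x.2 i = t ∧ x.2 i = 0}) ∧
    ((crpMeasure S0 r0 r α β) {x | crpLoss ν x = t}
        = (crpMeasure S0 r0 r α β) {x | crpLoss ν x - ν i * x.2 i = t ∧ x.2 i = 0} ↔
      ∀ᵐ x ∂(crpMeasure S0 r0 r α β),
        (crpLoss ν x = t ↔ (crpLoss ν x - ν i * x.2 i = t ∧ x.2 i = 0))) := by
  have := isProbabilityMeasure_crpMeasure S0 r0 r hα hβ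
  have null_iff := crpMeasure_counts_eq_zero_iff hS0 hr0 hr hrpos hα hβ
  set P := crpMeasure S0 r0 r α β
  have loss_split (v : Fin n → ℕ) :
      ∑ l, ν l * v l = ν i * v i + ∑ l ∈ Finset.univ.erase i, ν l * v l :=
    (Finset.add_sum_erase _ _ (Finset.mem_univ i)).symm
  -- the loss `Y` of the obligors other than `i`
  set rest : (Fin n → ℕ) → ℕ := fun v => ∑ l ∈ Finset.univ.erase i, ν l * v l
  have loss_eq (x : (Fin k → ℝ) × (Fin n → ℕ)) : crpLoss ν x = ν i * x.2 i + rest x.2 :=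
    loss_split x.2
  have rest_update (v : Fin n → ℕ) (m : ℕ) : rest (Function.update v i m) = rest v :=
    Finset.sum_congr rfl fun l hl => by
      rw [Function.update_of_ne (Finset.ne_of_mem_erase hl)]
  simp only [loss_eq, Nat.add_sub_cancel_left]
  have hsub : {x : (Fin k → ℝ) × (Fin n → ℕ) | rest x.2 = t ∧ x.2 i = 0} ⊆
      {x | ν i * x.2 i + rest x.2 = t} := by
    rintro x ⟨h, h0⟩
    simp [h, h0]
  have hmeas : MeasurableSet {x : (Fin k → ℝ) × (Fin n → ℕ) | rest x.2 = t ∧ x.2 i = 0} :=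
    measurable_snd (MeasurableSet.of_discrete (s := {v | rest v = t ∧ v i = 0}))
  have event_iff (v : Fin n → ℕ) : ¬ (ν i * v i + rest v = t ↔ rest v = t ∧ v i = 0) ↔
      ν i * v i + rest v = t ∧ v i ≠ 0 := by
    rcases Nat.eq_zero_or_pos (v i) with h | h
    · simp [h]
    · simp [h.ne']
  have hae : (∀ᵐ x ∂P, (ν i * x.2 i + rest x.2 = t ↔ rest x.2 = t ∧ x.2 i = 0)) ↔
      ∀ v : Fin n → ℕ, ¬ (ν i * v i + rest v = t ∧ v i ≠ 0) := by
    rw [ae_iff, ← null_iff]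
    simp only [event_iff]
  have hmass : P {x | ν i * x.2 i + rest x.2 = t} = P {x | rest x.2 = t ∧ x.2 i = 0} ↔
      ∀ v : Fin n → ℕ, ¬ (ν i * v i + rest v = t ∧ v i ≠ 0) := by
    rw [← hae]
    refine ⟨fun h => ?_, fun h => measure_congr (h.mono fun x hx => propext hx)⟩
    exact (ae_eq_of_subset_of_measure_ge hsub h.le hmeas.nullMeasurableSet
      (measure_ne_top P _)).symm.mem_iff
  have hrests : (∀ m : ℕ, 1 ≤ m → m * ν i ≤ t → P {x | rest x.2 = t - m * ν i} = 0) ↔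
      ∀ v : Fin n → ℕ, ¬ (ν i * v i + rest v = t ∧ v i ≠ 0) := by
    refine ⟨fun h v ⟨hv, hv0⟩ => ?_, fun h m hm hmt => ?_⟩
    · have hc := Nat.mul_comm (ν i) (v i)
      exact (null_iff fun w => rest w = t - v i * ν i).1
        (h (v i) (Nat.one_le_iff_ne_zero.2 hv0) (by lia)) v (by lia)
    · refine (null_iff fun w => rest w = t - m * ν i).2 fun v hv => h (Function.update v i m) ?_
      have hc := Nat.mul_comm (ν i) m
      rw [rest_update, Function.update_self]
      lia
  refine ⟨?_, hrests.trans hmass.symm, hmass.trans hae.symm⟩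
  rw [hrests, null_iff fun w => ν i * w i + rest w = t - ν i]
  refine ⟨fun h v ⟨hv, hv0⟩ => ?_, fun h ht v hv => h (Function.update v i (v i + 1)) ?_⟩
  · obtain ⟨m, hm⟩ := Nat.exists_eq_succ_of_ne_zero hv0
    rw [hm, Nat.mul_succ] at hv
    refine h (by lia) (Function.update v i m) ?_
    rw [rest_update, Function.update_self]
    lia
  · rw [rest_update, Function.update_self, Nat.mul_succ]
    lia
end
end
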